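/- arXiv:1206.3832 — 2 statements merged into one kernel-verified Lean document; each statement's English description precedes it below -/
import Mathlib

section
/- Let d ≥ 1, let Λ be a finite subset of ℤ^d, and let ψ : ℤ^d → ℝ satisfy ψ(x) ≤ 0 for every x ∉ Λ. Then ∑_{x∈Λ} ψ⁺(x)·Δψ(x) ≤ −(1/2)·∑_{b∈Λ̄*} (∇(ψ⁺)(b))² ≤ 0, where ψ⁺(x) = max(ψ(x), 0). -/
/-!
Since `ψ⁺` vanishes off `Λ`, the left-hand sum equals `∑ ψ⁺(x) (ψ(y) - ψ(x))` over all directed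
bonds `(x, y)` of `barBonds d Λ` (`sum_mul_lap_eq`). The set of bonds is invariant under reversal,
so averaging this sum with its reversed form gives
`-(1/2) ∑ (ψ⁺(x) - ψ⁺(y)) (ψ(x) - ψ(y))`. The bound then holds bond by bond, by the inequality
`(a⁺ - b⁺)² ≤ (a⁺ - b⁺) (a - b)` for real `a`, `b` (`sq_max_sub_le`).
-/

/-- The set of nearest neighbors of `x` in `ℤ^d` (the `2d` points at Euclidean
distance `1` from `x`, i.e. `x ± eᵢ`). -/
def nbrs (d : ℕ) (x : Fin d → ℤ) : Finset (Fin d → ℤ) :=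
  Finset.image
    (fun p : Fin d × Bool => Function.update x p.1 (x p.1 + if p.2 then 1 else -1))
    Finset.univ

/-- The discrete Laplacian on `ℤ^d`: `Δf(x) = ∑_{y : |x−y|=1} (f(y) − f(x))`. -/
def lap (d : ℕ) (f : (Fin d → ℤ) → ℝ) (x : Fin d → ℤ) : ℝ :=
  ∑ y ∈ nbrs d x, (f y - f x)

/-- The set `Λ̄*` of directed bonds `b = (x, y)`, `|x−y| = 1`, having at least one
endpoint in `Λ`. -/
def barBonds (d : ℕ) (Λ : Finset (Fin d → ℤ)) :
    Finset ((Fin d → ℤ) × (Fin d → ℤ)) :=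
  (Λ.biUnion fun x => (nbrs d x).image fun y => (x, y)) ∪
    (Λ.biUnion fun y => (nbrs d y).image fun x => (x, y))

/-- The discrete gradient `∇f(b) = f(x) − f(y)` for a directed bond `b = (x, y)`. -/
def grad (d : ℕ) (f : (Fin d → ℤ) → ℝ) (b : (Fin d → ℤ) × (Fin d → ℤ)) : ℝ :=
  f b.1 - f b.2


lemma mem_nbrs_symm {d : ℕ} {x y : Fin d → ℤ} (h : y ∈ nbrs d x) : x ∈ nbrs d y := by
  simp only [nbrs, Finset.mem_image, Finset.mem_univ, true_and] at h ⊢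
  obtain ⟨⟨i, s⟩, rfl⟩ := h
  refine ⟨(i, !s), ?_⟩
  cases s <;> simp

lemma mem_barBonds {d : ℕ} {Λ : Finset (Fin d → ℤ)} {x y : Fin d → ℤ} :
    (x, y) ∈ barBonds d Λ ↔ y ∈ nbrs d x ∧ (x ∈ Λ ∨ y ∈ Λ) := by
  have hs : x ∈ nbrs d y ↔ y ∈ nbrs d x := ⟨mem_nbrs_symm, mem_nbrs_symm⟩
  have h : (x, y) ∈ barBonds d Λ ↔ (x ∈ Λ ∧ y ∈ nbrs d x) ∨ (y ∈ Λ ∧ x ∈ nbrs d y) := by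
    simp [barBonds]
  rw [h, hs]
  tauto

lemma sum_barBonds_swap {d : ℕ} (Λ : Finset (Fin d → ℤ))
    (F : (Fin d → ℤ) → (Fin d → ℤ) → ℝ) :
    ∑ b ∈ barBonds d Λ, F b.1 b.2 = ∑ b ∈ barBonds d Λ, F b.2 b.1 := by
  have hswap : ∀ b ∈ barBonds d Λ, b.swap ∈ barBonds d Λ := by
    rintro ⟨x, y⟩ h
    rw [mem_barBonds] at h
    exact mem_barBonds.2 ⟨mem_nbrs_symm h.1, h.2.symm⟩
  exact Finset.sum_nbij' Prod.swap Prod.swap hswap hswap (by simp) (by simp) (by simp)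

/-- Bonds of `barBonds d Λ` starting outside `Λ` carry weight `0`, so they may be added to the
sum defining the left-hand side. -/
lemma sum_mul_lap_eq {d : ℕ} (Λ : Finset (Fin d → ℤ)) (f g : (Fin d → ℤ) → ℝ)
    (hf : ∀ x ∉ Λ, f x = 0) :
    ∑ x ∈ Λ, f x * lap d g x = ∑ b ∈ barBonds d Λ, f b.1 * (g b.2 - g b.1) := by
  simp only [lap, Finset.mul_sum]
  rw [Finset.sum_sigma']
  refine Finset.sum_of_injOn (fun p => (p.1, p.2)) ?_ ?_ ?_ (fun _ _ => rfl)
  · rintro ⟨x, y⟩ _ ⟨x', y'⟩ _ h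
    simp only [Prod.mk.injEq] at h
    obtain ⟨rfl, rfl⟩ := h
    rfl
  · rintro ⟨x, y⟩ h
    obtain ⟨hx, hy⟩ := Finset.mem_sigma.1 (Finset.mem_coe.1 h)
    exact mem_barBonds.2 ⟨hy, Or.inl hx⟩
  · rintro ⟨x, y⟩ hb hn
    have hx : x ∉ Λ := fun hx =>
      hn ⟨⟨x, y⟩, Finset.mem_coe.2 (Finset.mem_sigma.2 ⟨hx, (mem_barBonds.1 hb).1⟩), rfl⟩
    simp [hf x hx]

lemma sq_max_sub_le (a b : ℝ) :
    (max a 0 - max b 0) ^ 2 ≤ (max a 0 - max b 0) * (a - b) := by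
  rcases le_total a 0 with ha | ha <;> rcases le_total b 0 with hb | hb <;>
    simp only [max_eq_left, max_eq_right, ha, hb] <;> nlinarith

/-- If `ψ ≤ 0` outside the finite set `Λ`, then
`∑_{x∈Λ} ψ⁺(x)·Δψ(x) ≤ −(1/2)·∑_{b∈Λ̄*} (∇(ψ⁺)(b))² ≤ 0`,
where `ψ⁺(x) = max (ψ(x)) 0`. -/
theorem stmt_6 (d : ℕ) (hd : 1 ≤ d) (Λ : Finset (Fin d → ℤ))
    (ψ : (Fin d → ℤ) → ℝ) (hψ : ∀ x ∉ Λ, ψ x ≤ 0) :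
    (∑ x ∈ Λ, max (ψ x) 0 * lap d ψ x
        ≤ -(1 / 2) * ∑ b ∈ barBonds d Λ, (grad d (fun x => max (ψ x) 0) b) ^ 2)
      ∧ -(1 / 2) * ∑ b ∈ barBonds d Λ, (grad d (fun x => max (ψ x) 0) b) ^ 2 ≤ 0 := by
  constructor
  · have h1 := sum_mul_lap_eq Λ (fun x => max (ψ x) 0) ψ (fun x hx => max_eq_right (hψ x hx))
    have h2 := sum_barBonds_swap Λ (fun x y => max (ψ x) 0 * (ψ y - ψ x))
    have h3 : ∑ b ∈ barBonds d Λ, (grad d (fun x => max (ψ x) 0) b) ^ 2 ≤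
        ∑ b ∈ barBonds d Λ, (-(max (ψ b.1) 0 * (ψ b.2 - ψ b.1))
          - max (ψ b.2) 0 * (ψ b.1 - ψ b.2)) := by
      refine Finset.sum_le_sum fun b _ => (sq_max_sub_le (ψ b.1) (ψ b.2)).trans_eq ?_
      ring
    rw [Finset.sum_sub_distrib, Finset.sum_neg_distrib] at h3
    linarith
  · have h : 0 ≤ ∑ b ∈ barBonds d Λ, (grad d (fun x => max (ψ x) 0) b) ^ 2 :=
      Finset.sum_nonneg fun b _ => sq_nonneg _
    linarith
end

section
/- Let d ≥ 1, let Λ be a finite subset of ℤ^d, let f₁, f₂ : ℝ → ℝ be nondecreasing, and let g¹, g² : [0,∞) × ℤ^d → ℝ. Suppose (u¹, u²) and (ũ¹, ũ²) are pairs of functions [0,∞) → (ℤ^d → ℝ) such that for i = 1, 2, every x ∉ Λ and t ≥ 0, u^i_t(x) = u^i_0(x) and ũ^i_t(x) = ũ^i_0(x), and for every x ∈ Λ the maps t ↦ u^i_t(x), t ↦ ũ^i_t(x) are differentiable and both pairs satisfy the system d/dt v¹_t(x) = Δv¹_t(x) − f₁(v¹_t(x)) + f₂(v²_t(x) − v¹_t(x))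 + g¹_t(x), d/dt v²_t(x) = Δv²_t(x) − f₂(v²_t(x) − v¹_t(x)) + g²_t(x). If u^i_0(x) ≤ ũ^i_0(x) for i = 1, 2 and every x ∈ ℤ^d, then u^i_t(x) ≤ ũ^i_t(x) for every i = 1, 2, t ≥ 0 and x ∈ ℤ^d. -/
/-- Maximum principle for a finite family of functions of time: if all of them start nonpositive,
and the largest one has nonpositive derivative whenever it is positive, then all of them stay
nonpositive. The reason is that otherwise, for small `ε > 0`, `w i s - ε * s` has a positive
maximum over `i` and `s ∈ [0, T]`, attained at a positive time, where the derivative of `w i` is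
at least `ε`. -/
theorem nonpos_of_deriv_nonpos_at_max {ι : Type*} [Finite ι] (w w' : ι → ℝ → ℝ)
    (hw : ∀ i, ∀ t : ℝ, 0 ≤ t → HasDerivWithinAt (w i) (w' i t) (Set.Ici 0) t)
    (h0 : ∀ i, w i 0 ≤ 0)
    (hmax : ∀ i, ∀ t : ℝ, 0 ≤ t → 0 < w i t → (∀ j, w j t ≤ w i t) → w' i t ≤ 0) :
    ∀ i, ∀ t : ℝ, 0 ≤ t → w i t ≤ 0 := by
  intro i₀ T hT
  by_contra! hpos
  obtain ⟨ε, hε, hεT⟩ : ∃ ε : ℝ, 0 < ε ∧ 0 < w i₀ T - ε * T := by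
    refine ⟨w i₀ T / (T + 1), by positivity, ?_⟩
    have : w i₀ T - w i₀ T / (T + 1) * T = w i₀ T / (T + 1) := by field_simp; ring
    rw [this]; positivity
  have hd : ∀ i, ∀ t ∈ Set.Icc 0 T,
      HasDerivWithinAt (fun s => w i s - ε * s) (w' i t - ε) (Set.Icc 0 T) t := by
    intro i t ht
    have h := ((hw i t ht.1).mono Set.Icc_subset_Ici_self).sub
      (((hasDerivAt_id t).const_mul ε).hasDerivWithinAt (s := Set.Icc 0 T))
    rw [mul_one] at h
    exact h
  have hT' : T ∈ Set.Icc 0 T := ⟨hT, le_rfl⟩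
  choose τ hτ hτmax using fun i => isCompact_Icc.exists_isMaxOn (s := Set.Icc 0 T) ⟨T, hT'⟩
    (fun t ht => (hd i t ht).continuousWithinAt)
  have : Nonempty ι := ⟨i₀⟩
  obtain ⟨i, hi⟩ := Finite.exists_max fun i => w i (τ i) - ε * τ i
  have hall : ∀ j, ∀ s ∈ Set.Icc 0 T, w j s - ε * s ≤ w i (τ i) - ε * τ i :=
    fun j s hs => (hτmax j hs).trans (hi j)
  have hival : 0 < w i (τ i) - ε * τ i := hεT.trans_le (hall i₀ T hT')
  have hτ0 : 0 < τ i := by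
    refine lt_of_le_of_ne (hτ i).1 fun h => ?_
    rw [← h] at hival
    linarith [h0 i]
  have hder : w' i (τ i) ≤ 0 := by
    refine hmax i (τ i) hτ0.le (by nlinarith) fun j => ?_
    linarith [hall j (τ i) (hτ i)]
  -- The direction from `τ i` to `0` is tangent to `[0, T]`, so the derivative along it is `≤ 0`.
  have hcone : (0 : ℝ) - τ i ∈ posTangentConeAt (Set.Icc 0 T) (τ i) :=
    sub_mem_posTangentConeAt_of_segment_subset
      ((convex_Icc 0 T).segment_subset (hτ i) ⟨le_rfl, hT⟩)
  have h := (hτmax i).localize.hasFDerivWithinAt_nonpos (hd i _ (hτ i)).hasFDerivWithinAt hcone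
  simp at h
  nlinarith

/-- If `a - b` attains its maximum at `x`, then `Δ(a - b)(x) ≤ 0`. -/
theorem lap_le_lap_of_max {d : ℕ} {a b : (Fin d → ℤ) → ℝ} {x : Fin d → ℤ}
    (h : ∀ y, a y - b y ≤ a x - b x) : lap d a x ≤ lap d b x :=
  Finset.sum_le_sum fun y _ => by linarith [h y]

/-- Pathwise comparison principle in the initial data for the coupled two-interface
system: if `f₁, f₂` are nondecreasing and the pairs `(u¹, u²)` and `(ũ¹, ũ²)` both
solve the system
`d/dt v¹_t(x) = Δv¹_t(x) − f₁(v¹_t(x)) + f₂(v²_t(x) − v¹_t(x)) + g¹_t(x)`,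
`d/dt v²_t(x) = Δv²_t(x) − f₂(v²_t(x) − v¹_t(x)) + g²_t(x)`
on a finite set `Λ` (frozen to their initial values outside `Λ`), with
`u^i_0 ≤ ũ^i_0` for `i = 1, 2`, then `u^i_t ≤ ũ^i_t` for all `t ≥ 0`. -/
theorem stmt_15 (d : ℕ) (hd : 1 ≤ d) (Λ : Finset (Fin d → ℤ))
    (f₁ f₂ : ℝ → ℝ) (hf₁ : Monotone f₁) (hf₂ : Monotone f₂)
    (g₁ g₂ : ℝ → (Fin d → ℤ) → ℝ)
    (u₁ u₂ v₁ v₂ : ℝ → (Fin d → ℤ) → ℝ)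
    (hu₁_out : ∀ x : Fin d → ℤ, x ∉ Λ → ∀ t : ℝ, 0 ≤ t → u₁ t x = u₁ 0 x)
    (hu₂_out : ∀ x : Fin d → ℤ, x ∉ Λ → ∀ t : ℝ, 0 ≤ t → u₂ t x = u₂ 0 x)
    (hv₁_out : ∀ x : Fin d → ℤ, x ∉ Λ → ∀ t : ℝ, 0 ≤ t → v₁ t x = v₁ 0 x)
    (hv₂_out : ∀ x : Fin d → ℤ, x ∉ Λ → ∀ t : ℝ, 0 ≤ t → v₂ t x = v₂ 0 x)
    (hu₁ : ∀ x ∈ Λ, ∀ t : ℝ, 0 ≤ t →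
      HasDerivWithinAt (fun s => u₁ s x)
        (lap d (u₁ t) x - f₁ (u₁ t x) + f₂ (u₂ t x - u₁ t x) + g₁ t x) (Set.Ici 0) t)
    (hu₂ : ∀ x ∈ Λ, ∀ t : ℝ, 0 ≤ t →
      HasDerivWithinAt (fun s => u₂ s x)
        (lap d (u₂ t) x - f₂ (u₂ t x - u₁ t x) + g₂ t x) (Set.Ici 0) t)
    (hv₁ : ∀ x ∈ Λ, ∀ t : ℝ, 0 ≤ t →
      HasDerivWithinAt (fun s => v₁ s x)
        (lap d (v₁ t) x - f₁ (v₁ t x) + f₂ (v₂ t x - v₁ t x) + g₁ t x) (Set.Ici 0) t)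
    (hv₂ : ∀ x ∈ Λ, ∀ t : ℝ, 0 ≤ t →
      HasDerivWithinAt (fun s => v₂ s x)
        (lap d (v₂ t) x - f₂ (v₂ t x - v₁ t x) + g₂ t x) (Set.Ici 0) t)
    (h01 : ∀ x, u₁ 0 x ≤ v₁ 0 x) (h02 : ∀ x, u₂ 0 x ≤ v₂ 0 x) :
    ∀ t : ℝ, 0 ≤ t → ∀ x, u₁ t x ≤ v₁ t x ∧ u₂ t x ≤ v₂ t x := by
  have hout₁ : ∀ t, 0 ≤ t → ∀ y ∉ Λ, u₁ t y - v₁ t y ≤ 0 := fun t ht y hy => by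
    rw [hu₁_out y hy t ht, hv₁_out y hy t ht]; linarith [h01 y]
  have hout₂ : ∀ t, 0 ≤ t → ∀ y ∉ Λ, u₂ t y - v₂ t y ≤ 0 := fun t ht y hy => by
    rw [hu₂_out y hy t ht, hv₂_out y hy t ht]; linarith [h02 y]
  -- The left and right summands index the first and second interface.
  have key := nonpos_of_deriv_nonpos_at_max (ι := Λ ⊕ Λ)
    (Sum.elim (fun x t => u₁ t x - v₁ t x) (fun x t => u₂ t x - v₂ t x))
    (Sum.elim
      (fun x t => (lap d (u₁ t) x - f₁ (u₁ t x) + f₂ (u₂ t x - u₁ t x) + g₁ t x) -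
        (lap d (v₁ t) x - f₁ (v₁ t x) + f₂ (v₂ t x - v₁ t x) + g₁ t x))
      (fun x t => (lap d (u₂ t) x - f₂ (u₂ t x - u₁ t x) + g₂ t x) -
        (lap d (v₂ t) x - f₂ (v₂ t x - v₁ t x) + g₂ t x)))
    ?_ ?_ ?_
  · intro t ht x
    by_cases hx : x ∈ Λ
    · have h1 := key (Sum.inl ⟨x, hx⟩) t ht
      have h2 := key (Sum.inr ⟨x, hx⟩) t ht
      simp only [Sum.elim_inl, Sum.elim_inr] at h1 h2
      constructor <;> linarith
    · constructor <;> linarith [hout₁ t ht x hx, hout₂ t ht x hx]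
  · rintro (⟨x, hx⟩ | ⟨x, hx⟩) t ht
    · exact (hu₁ x hx t ht).sub (hv₁ x hx t ht)
    · exact (hu₂ x hx t ht).sub (hv₂ x hx t ht)
  · rintro (⟨x, hx⟩ | ⟨x, hx⟩)
    · simpa using h01 x
    · simpa using h02 x
  · rintro (⟨x, hx⟩ | ⟨x, hx⟩) t ht hpos hm
    · simp only [Sum.elim_inl] at hpos ⊢
      have hlap : lap d (u₁ t) x ≤ lap d (v₁ t) x := lap_le_lap_of_max fun y => by
        by_cases hy : y ∈ Λ
        · exact hm (Sum.inl ⟨y, hy⟩)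
        · exact (hout₁ t ht y hy).trans hpos.le
      have h2 : u₂ t x - v₂ t x ≤ u₁ t x - v₁ t x := hm (Sum.inr ⟨x, hx⟩)
      have hm₁ : f₁ (v₁ t x) ≤ f₁ (u₁ t x) := hf₁ (by linarith)
      have hm₂ : f₂ (u₂ t x - u₁ t x) ≤ f₂ (v₂ t x - v₁ t x) := hf₂ (by linarith)
      linarith
    · simp only [Sum.elim_inr] at hpos ⊢
      have hlap : lap d (u₂ t) x ≤ lap d (v₂ t) x := lap_le_lap_of_max fun y => by
        by_cases hy : y ∈ Λ
        · exact hm (Sum.inr ⟨y, hy⟩)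
        · exact (hout₂ t ht y hy).trans hpos.le
      have h1 : u₁ t x - v₁ t x ≤ u₂ t x - v₂ t x := hm (Sum.inl ⟨x, hx⟩)
      have hm₂ : f₂ (v₂ t x - v₁ t x) ≤ f₂ (u₂ t x - u₁ t x) := hf₂ (by linarith)
      linarith
end
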